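/- Let G be a finite group of order p^a q^b with a + b > 0 (p, q primes). Then G has a nontrivial one-dimensional complex representation, equivalently the abelianization of G is nontrivial. -/

import Mathlib

/-!
An average of roots of unity which is an algebraic integer is either zero or a root of unity, and
in the latter case all the terms agree. Applied to the eigenvalues of `ρ g`, for `ρ` irreducible of
dimension prime to the size of the conjugacy class of `g`, this shows that `χ g = 0` or `ρ g` is a
scalar; in a simple group, a scalar `ρ g` with `ρ` nontrivial forces `g` to be central.

If the class of a noncentral `g` in a simple group had prime power size `q ^ n`, then in
`0 = ∑ χ, χ 1 * χ g`, the value at `g` of the regular character, every nontrivial term would be `q`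
times an algebraic integer, so `-1 / q` would be an algebraic integer. On the other hand, the class
of a central element of a Sylow `p`-subgroup has size prime to `p`. Hence no nonabelian simple
group has order `p ^ a * q ^ b`, groups of such an order are solvable, and a nontrivial solvable
group has a nontrivial abelianization, which characters separate.
-/

open Module

section AverageOfRootsOfUnity

variable {ι : Type*} [Fintype ι]

theorem eq_of_norm_le_of_sum_eq_card_smul {E : Type*} [NormedAddCommGroup E]
    [InnerProductSpace ℝ E] {x : ι → E} {c : E} (hx : ∀ i, ‖x i‖ ≤ ‖c‖)
    (hsum : ∑ i, x i = Fintype.card ι • c) (i : ι) : x i = c := by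
  have hdist : ∑ i, ‖x i - c‖ ^ 2 ≤ 0 := calc
    ∑ i, ‖x i - c‖ ^ 2 = ∑ i, (‖x i‖ ^ 2 - 2 * inner ℝ (x i) c + ‖c‖ ^ 2) := by
      simp only [norm_sub_sq_real]
    _ ≤ ∑ i, (2 * ‖c‖ ^ 2 - 2 * inner ℝ (x i) c) := by
      gcongr with i
      linarith [pow_le_pow_left₀ (norm_nonneg _) (hx i) 2]
    _ = 0 := by
      rw [Finset.sum_sub_distrib, Finset.sum_const, Finset.card_univ, ← Finset.mul_sum,
        ← sum_inner, hsum, ← Nat.cast_smul_eq_nsmul ℝ _ c, real_inner_smul_left,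
        real_inner_self_eq_norm_sq, nsmul_eq_mul]
      ring
  have hzero : ‖x i - c‖ ^ 2 ≤ 0 :=
    (Finset.single_le_sum (fun j _ ↦ sq_nonneg ‖x j - c‖) (Finset.mem_univ i)).trans hdist
  simpa [sub_eq_zero] using hzero.antisymm (sq_nonneg _)

variable {z : ι → ℂ}

-- Every Galois conjugate of the average is again an average of roots of unity, hence has norm at
-- most one, and Kronecker's theorem applies.
theorem norm_average_eq_one_of_isIntegral (hz : ∀ i, IsOfFinOrder (z i)) (hsum : ∑ i, z i ≠ 0)
    (hint : IsIntegral ℤ ((∑ i, z i) / Fintype.card ι)) :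
    ‖(∑ i, z i) / Fintype.card ι‖ = 1 := by
  let K := IntermediateField.adjoin ℚ (Set.range z)
  have : FiniteDimensional ℚ K := IntermediateField.finiteDimensional_adjoin <| by
    rintro _ ⟨i, rfl⟩
    obtain ⟨n, hn, hzn⟩ := (hz i).exists_pow_eq_one
    exact .of_pow hn (hzn ▸ isIntegral_one)
  have : NumberField K := { }
  let y (i : ι) : K := ⟨z i, IntermediateField.subset_adjoin ℚ _ ⟨i, rfl⟩⟩
  have hy (i : ι) : IsOfFinOrder (y i) :=
    (Function.Injective.isOfFinOrder_iff (f := K.val.toMonoidHom) K.val.injective).1 (hz i)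
  let α : K := (∑ i, y i) / Fintype.card ι
  have hα : algebraMap K ℂ α = (∑ i, z i) / Fintype.card ι := by simp [α, y]
  have hα₀ : α ≠ 0 := by
    have : Nonempty ι := not_isEmpty_iff.1 fun _ ↦ hsum (Fintype.sum_empty z)
    rw [← map_ne_zero (algebraMap K ℂ), hα]
    exact div_ne_zero hsum (Nat.cast_ne_zero.2 Fintype.card_ne_zero)
  have hφy (φ : K →+* ℂ) (i : ι) : ‖φ (y i)‖ = 1 :=
    (φ.toMonoidHom.isOfFinOrder (hy i)).norm_eq_one
  have hconj (φ : K →+* ℂ) : ‖φ α‖ ≤ 1 := calc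
    ‖φ α‖ = ‖∑ i, φ (y i)‖ / Fintype.card ι := by
      rw [map_div₀, map_sum, map_natCast, norm_div, Complex.norm_natCast]
    _ ≤ (∑ i, ‖φ (y i)‖) / Fintype.card ι := by gcongr; exact norm_sum_le _ _
    _ = Fintype.card ι / Fintype.card ι := by simp [hφy]
    _ ≤ 1 := div_self_le_one _
  have hαint : IsIntegral ℤ α :=
    (isIntegral_algebraMap_iff (algebraMap K ℂ).injective).1 (hα ▸ hint)
  obtain ⟨n, hn, hαn⟩ := NumberField.Embeddings.pow_eq_one_of_norm_le_one K ℂ hα₀ hαint hconj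
  rw [← hα]
  exact Complex.norm_eq_one_of_pow_eq_one (by rw [← map_pow, hαn, map_one]) hn.ne'

theorem eq_average_of_isIntegral_average (hz : ∀ i, IsOfFinOrder (z i)) (hsum : ∑ i, z i ≠ 0)
    (hint : IsIntegral ℤ ((∑ i, z i) / Fintype.card ι)) (i : ι) :
    z i = (∑ i, z i) / Fintype.card ι := by
  have : Nonempty ι := ⟨i⟩
  refine eq_of_norm_le_of_sum_eq_card_smul (fun j ↦ ?_) ?_ i
  · rw [norm_average_eq_one_of_isIntegral hz hsum hint, (hz j).norm_eq_one]
  · rw [nsmul_eq_mul, mul_div_cancel₀ _ (by simp)]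

end AverageOfRootsOfUnity

section FiniteOrderEndomorphisms

open Polynomial

variable {k V : Type*} [Field k] [AddCommGroup V] [Module k V] [FiniteDimensional k V]
  {f : End k V}

theorem isOfFinOrder_of_mem_roots_charpoly (hf : IsOfFinOrder f) {μ : k}
    (hμ : μ ∈ f.charpoly.roots) : IsOfFinOrder μ := by
  obtain ⟨n, hn, hfn⟩ := hf.exists_pow_eq_one
  have hfμ : f.HasEigenvalue μ :=
    (End.hasEigenvalue_iff_isRoot_charpoly f μ).2 (isRoot_of_mem_roots hμ)
  obtain ⟨v, hv⟩ := hfμ.exists_hasEigenvector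
  refine isOfFinOrder_iff_pow_eq_one.2 ⟨n, hn, smul_left_injective k hv.2 ?_⟩
  simp [← hv.pow_apply, hfn]

variable [IsAlgClosed k]

theorem isIntegral_trace_of_isOfFinOrder (hf : IsOfFinOrder f) :
    IsIntegral ℤ (LinearMap.trace k V f) := by
  rw [End.trace_eq_sum_roots_charpoly_of_splits (IsAlgClosed.splits _)]
  refine IsIntegral.multiset_sum fun μ hμ ↦ ?_
  obtain ⟨n, hn, hμn⟩ := (isOfFinOrder_of_mem_roots_charpoly hf hμ).exists_pow_eq_one
  exact .of_pow hn (hμn ▸ isIntegral_one)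

theorem eq_algebraMap_of_forall_mem_roots_charpoly_eq [CharZero k] (hf : IsOfFinOrder f) {c : k}
    (hc : ∀ μ ∈ f.charpoly.roots, μ = c) : f = algebraMap k (End k V) c := by
  obtain ⟨n, hn, hfn⟩ := hf.exists_pow_eq_one
  have hsep : (X ^ n - C 1 : k[X]).Separable :=
    separable_X_pow_sub_C 1 (by exact_mod_cast hn.ne') one_ne_zero
  have hsq : Squarefree (minpoly k f) :=
    hsep.squarefree.squarefree_of_dvd (minpoly.dvd _ _ (by simp [hfn]))
  have hchar : f.charpoly = (X - C c) ^ f.charpoly.roots.card := by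
    conv_lhs => rw [(IsAlgClosed.splits f.charpoly).eq_prod_roots_of_monic f.charpoly_monic]
    rw [Multiset.eq_replicate_of_mem hc]
    simp
  have hdvd : minpoly k f ∣ X - C c :=
    hsq.isRadical _ _ (hchar ▸ f.minpoly_dvd_charpoly)
  simpa [sub_eq_zero] using (minpoly.dvd_iff).1 hdvd

theorem exists_eq_algebraMap_of_isIntegral_trace_div_finrank {V : Type*} [AddCommGroup V]
    [Module ℂ V] [FiniteDimensional ℂ V] {f : End ℂ V} (hf : IsOfFinOrder f)
    (htr : LinearMap.trace ℂ V f ≠ 0)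
    (hint : IsIntegral ℤ (LinearMap.trace ℂ V f / finrank ℂ V)) :
    ∃ c : ℂ, f = algebraMap ℂ (End ℂ V) c := by
  let eigenvalue (i : f.charpoly.roots) : ℂ := i.1
  have hcard : Fintype.card f.charpoly.roots = finrank ℂ V := by
    rw [Multiset.card_coe, ← (IsAlgClosed.splits _).natDegree_eq_card_roots, f.charpoly_natDegree]
  have hsum : LinearMap.trace ℂ V f = ∑ i, eigenvalue i := by
    rw [End.trace_eq_sum_roots_charpoly_of_splits (IsAlgClosed.splits _)]
    exact Multiset.sum_eq_sum_coe _
  rw [hsum] at htr hint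
  rw [← hcard] at hint
  have hfin (i) : IsOfFinOrder (eigenvalue i) :=
    isOfFinOrder_of_mem_roots_charpoly hf Multiset.coe_mem
  exact ⟨_, eq_algebraMap_of_forall_mem_roots_charpoly_eq hf fun μ hμ ↦
      eq_average_of_isIntegral_average hfin htr hint ⟨μ, 0, Multiset.count_pos.2 hμ⟩⟩

end FiniteOrderEndomorphisms

section IrreducibleCharacters

open Representation

variable {G : Type*} [Group G]

theorem commute_sum_conjugatesOf {A : Type*} [Semiring A] (φ : G →* A) (g h : G)
    [Fintype (conjugatesOf g)] : Commute (φ h) (∑ x : conjugatesOf g, φ x) := by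
  have hmem (x : G) : x ∈ conjugatesOf g ↔ h * x * h⁻¹ ∈ conjugatesOf g := by
    have hx : IsConj x (h * x * h⁻¹) := isConj_iff.2 ⟨h, rfl⟩
    exact ⟨fun hgx ↦ hgx.trans hx, fun hgx ↦ hgx.trans hx.symm⟩
  let conjEquiv : conjugatesOf g ≃ conjugatesOf g := (MulAut.conj h).toEquiv.subtypeEquiv hmem
  calc φ h * ∑ x : conjugatesOf g, φ x
    _ = ∑ x : conjugatesOf g, φ (conjEquiv x) * φ h := by
      simp [Finset.mul_sum, conjEquiv, ← map_mul]
    _ = (∑ x : conjugatesOf g, φ x) * φ h := by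
      rw [← Finset.sum_mul, conjEquiv.sum_comp fun x ↦ φ x]

theorem isIntegral_sum_monoidHom {M A ι : Type*} [Monoid M] [Finite M] [Ring A] (φ : M →* A)
    (s : Finset ι) (x : ι → M) : IsIntegral ℤ (∑ i ∈ s, φ (x i)) := by
  have h : IsIntegral ℤ (∑ i ∈ s, MonoidAlgebra.of ℤ M (x i)) := Algebra.IsIntegral.isIntegral _
  simpa using h.map (MonoidAlgebra.lift ℤ A M φ)

variable {k V : Type*} [Field k] [AddCommGroup V] [Module k V] (ρ : Representation k G V)

section Irreducible

variable [ρ.IsIrreducible]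

include ρ in
theorem nontrivial_of_isIrreducible : Nontrivial V :=
  IsSimpleModule.nontrivial (MonoidAlgebra k G) ρ.asModule

theorem invariants_eq_bot_of_not_isTrivial (hρ : ¬ρ.IsTrivial) : ρ.invariants = ⊥ := by
  let W : Subrepresentation ρ := ⟨ρ.invariants, fun g v hv ↦ by rwa [hv g]⟩
  obtain hW | hW := eq_bot_or_eq_top W
  · exact congrArg Subrepresentation.toSubmodule hW
  · have htop : ρ.invariants = ⊤ := congrArg Subrepresentation.toSubmodule hW
    refine absurd ⟨fun g ↦ LinearMap.ext fun v ↦ ?_⟩ hρ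
    exact (ρ.mem_invariants v).1 (htop ▸ Submodule.mem_top) g

end Irreducible

section AlgClosed

variable [IsAlgClosed k] [FiniteDimensional k V]

theorem isIntegral_character [Finite G] (g : G) : IsIntegral ℤ (ρ.character g) :=
  isIntegral_trace_of_isOfFinOrder (ρ.isOfFinOrder (isOfFinOrder_of_finite g))

variable [ρ.IsIrreducible]

theorem exists_eq_algebraMap_of_forall_commute {f : End k V} (hf : ∀ g, Commute (ρ g) f) :
    ∃ c : k, f = algebraMap k (End k V) c := by
  let F : IntertwiningMap ρ ρ := f.intertwiningMap_of_isIntertwiningMap ρ ρ fun g v ↦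
    LinearMap.congr_fun (hf g).eq.symm v
  obtain ⟨c, hc⟩ := (IsIrreducible.algebraMap_intertwiningMap_bijective_of_isAlgClosed (ρ := ρ)).2 F
  exact ⟨c, LinearMap.ext fun v ↦ (DFunLike.congr_fun hc v).symm⟩

theorem isIntegral_card_conjugatesOf_mul_character_div_finrank [CharZero k] [Finite G] (g : G) :
    IsIntegral ℤ (Nat.card (conjugatesOf g) * ρ.character g / finrank k V) := by
  have := Fintype.ofFinite (conjugatesOf g)
  have : Nontrivial V := nontrivial_of_isIrreducible ρ
  obtain ⟨c, hc⟩ := exists_eq_algebraMap_of_forall_commute ρ (commute_sum_conjugatesOf ρ g ·)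
  have hchar (x : conjugatesOf g) : ρ.character x = ρ.character g := by
    obtain ⟨h, hh⟩ := isConj_iff.1 x.2
    rw [← hh, char_conj]
  have hc_eq : c = Nat.card (conjugatesOf g) * ρ.character g / finrank k V := by
    rw [eq_div_iff (Nat.cast_ne_zero.2 finrank_pos.ne')]
    calc c * finrank k V = LinearMap.trace k V (algebraMap k (End k V) c) := by
          simp [Algebra.algebraMap_eq_smul_one]
      _ = ∑ x : conjugatesOf g, ρ.character x := by rw [← hc, map_sum]; rfl
      _ = Nat.card (conjugatesOf g) * ρ.character g := by simp [hchar]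
  rw [← hc_eq, ← isIntegral_algebraMap_iff (FaithfulSMul.algebraMap_injective k (End k V)), ← hc]
  exact isIntegral_sum_monoidHom ρ Finset.univ _

theorem isIntegral_character_div_finrank_of_coprime [CharZero k] [Finite G] {g : G}
    (hcop : (Nat.card (conjugatesOf g)).Coprime (finrank k V)) :
    IsIntegral ℤ (ρ.character g / finrank k V) := by
  have : Nontrivial V := nontrivial_of_isIrreducible ρ
  have hV : (finrank k V : k) ≠ 0 := Nat.cast_ne_zero.2 finrank_pos.ne'
  obtain ⟨u, v, huv⟩ := Nat.isCoprime_iff_coprime.2 hcop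
  have huv' : (u * Nat.card (conjugatesOf g) + v * finrank k V : k) = 1 := by exact_mod_cast huv
  have hbezout : ρ.character g / finrank k V =
      u • (Nat.card (conjugatesOf g) * ρ.character g / finrank k V) + v • ρ.character g := by
    rw [zsmul_eq_mul, zsmul_eq_mul]
    field_simp
    linear_combination -ρ.character g * huv'
  rw [hbezout]
  exact ((isIntegral_card_conjugatesOf_mul_character_div_finrank ρ g).smul u).add
    ((isIntegral_character ρ g).smul v)

end AlgClosed

theorem character_eq_zero_of_coprime [Finite G] [IsSimpleGroup G] {V : Type*} [AddCommGroup V]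
    [Module ℂ V] [FiniteDimensional ℂ V] (ρ : Representation ℂ G V) [ρ.IsIrreducible]
    (hρ : ¬ρ.IsTrivial) {g : G} (hg : g ∉ Subgroup.center G)
    (hcop : (Nat.card (conjugatesOf g)).Coprime (finrank ℂ V)) : ρ.character g = 0 := by
  have hinj : Function.Injective ρ := by
    rw [← MonoidHom.ker_eq_bot_iff]
    refine (IsSimpleGroup.eq_bot_or_eq_top_of_normal ρ.ker inferInstance).resolve_right fun h ↦ ?_
    exact hρ ⟨fun x ↦ MonoidHom.mem_ker.1 (h ▸ Subgroup.mem_top x)⟩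
  by_contra hχ
  obtain ⟨c, hc⟩ := exists_eq_algebraMap_of_isIntegral_trace_div_finrank
    (ρ.isOfFinOrder (isOfFinOrder_of_finite g)) hχ
    (isIntegral_character_div_finrank_of_coprime ρ hcop)
  refine hg (Subgroup.mem_center_iff.2 fun h ↦ hinj ?_)
  rw [map_mul, map_mul, hc, Algebra.commutes]

end IrreducibleCharacters

section RegularRepresentation

open Representation

section TraceMulLeft

variable {R : Type*} [CommRing R]

theorem trace_mulLeft_algEquiv {A B : Type*} [Ring A] [Ring B] [Algebra R A] [Algebra R B]
    (e : A ≃ₐ[R] B) (x : A) :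
    LinearMap.trace R B (LinearMap.mulLeft R (e x)) =
      LinearMap.trace R A (LinearMap.mulLeft R x) := by
  rw [← LinearMap.trace_conj' _ e.toLinearEquiv]
  congr 1
  ext y
  simp [LinearEquiv.conj_apply]

theorem trace_eq_sum_repr_apply {ι M : Type*} [Fintype ι] [AddCommGroup M] [Module R M]
    (b : Basis ι R M) (f : End R M) : LinearMap.trace R M f = ∑ i, b.repr (f (b i)) i := by
  classical
  rw [LinearMap.trace_eq_matrix_trace R b, Matrix.trace]
  exact Finset.sum_congr rfl fun i _ ↦ LinearMap.toMatrix_apply b b f i i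

theorem trace_mulLeft_pi {ι : Type*} [Fintype ι] {A : ι → Type*} [∀ i, Ring (A i)]
    [∀ i, Algebra R (A i)] [∀ i, Free R (A i)] [∀ i, Module.Finite R (A i)] (x : ∀ i, A i) :
    LinearMap.trace R (∀ i, A i) (LinearMap.mulLeft R x) =
      ∑ i, LinearMap.trace R (A i) (LinearMap.mulLeft R (x i)) := by
  classical
  let b (i : ι) := Free.chooseBasis R (A i)
  simp only [trace_eq_sum_repr_apply (Pi.basis b), Fintype.sum_sigma,
    fun i ↦ trace_eq_sum_repr_apply (b i)]
  simp

theorem trace_mulLeft_matrix {n : Type*} [Fintype n] (M : Matrix n n R) :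
    LinearMap.trace R (Matrix n n R) (LinearMap.mulLeft R M) = Fintype.card n * M.trace := by
  classical
  have hrepr (N : Matrix n n R) (i j : n) : (Matrix.stdBasis R n n).repr N (i, j) = N i j := by
    simp [Matrix.stdBasis]
  rw [trace_eq_sum_repr_apply (Matrix.stdBasis R n n), Fintype.sum_prod_type]
  simp [hrepr, Matrix.stdBasis_eq_single, Matrix.trace, Finset.mul_sum]

end TraceMulLeft

variable {k G : Type*} [Field k] [Group G]

theorem leftRegular_eq_mulLeft (g : G) :
    leftRegular k G g = LinearMap.mulLeft k (MonoidAlgebra.single g (1 : k)) := by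
  ext h : 2
  simp

theorem character_leftRegular [Finite G] [DecidableEq G] (g : G) :
    (leftRegular k G).character g = if g = 1 then (Nat.card G : k) else 0 := by
  have := Fintype.ofFinite G
  have hrepr (h : G) : (MonoidAlgebra.basis G k).repr
      (leftRegular k G g (MonoidAlgebra.basis G k h)) h = if g = 1 then 1 else 0 := by
    rw [MonoidAlgebra.basis_apply, ofMulAction_single, ← MonoidAlgebra.basis_apply,
      Basis.repr_self, Finsupp.single_apply]
    simp
  rw [character, trace_eq_sum_repr_apply (MonoidAlgebra.basis G k)]
  simp only [hrepr]
  simp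

theorem isIrreducible_of_surjective_asAlgebraHom {V : Type*} [AddCommGroup V] [Module k V]
    [Nontrivial V] {ρ : Representation k G V} (hρ : Function.Surjective ρ.asAlgebraHom) :
    ρ.IsIrreducible := by
  rw [irreducible_iff_isSimpleModule_asModule, isSimpleModule_iff_toSpanSingleton_surjective]
  refine ⟨‹Nontrivial V›, fun v hv w ↦ ?_⟩
  obtain ⟨f, hf⟩ := IsSimpleModule.toSpanSingleton_surjective (End k V) (M := V)
    (ρ.asModuleEquiv.map_ne_zero_iff.2 hv) (ρ.asModuleEquiv w)
  obtain ⟨r, rfl⟩ := hρ f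
  exact ⟨r, hf⟩

theorem exists_isIrreducible_character_leftRegular_eq_sum (k G : Type*) [Field k] [IsAlgClosed k]
    [CharZero k] [Group G] [Finite G] :
    ∃ (m : ℕ) (d : Fin m → ℕ) (ρ : ∀ i, Representation k G (Fin (d i) → k)),
      (∀ i, (ρ i).IsIrreducible) ∧
        ∀ g, (leftRegular k G).character g = ∑ i, d i * (ρ i).character g := by
  obtain ⟨m, d, _, ⟨e⟩⟩ :=
    IsSemisimpleRing.exists_algEquiv_pi_matrix_of_isAlgClosed k (MonoidAlgebra k G)
  let E (i : Fin m) : MonoidAlgebra k G →ₐ[k] End k (Fin (d i) → k) :=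
    Matrix.toLinAlgEquiv'.toAlgHom.comp ((Pi.evalAlgHom k _ i).comp e.toAlgHom)
  let ρ (i : Fin m) : Representation k G (Fin (d i) → k) :=
    (MonoidAlgebra.lift k _ G).symm (E i)
  refine ⟨m, d, ρ, fun i ↦ ?_, fun g ↦ ?_⟩
  · have hE : Function.Surjective (E i) :=
      Matrix.toLinAlgEquiv'.surjective.comp ((Function.surjective_eval i).comp e.surjective)
    have : (ρ i).asAlgebraHom = E i := (MonoidAlgebra.lift k _ G).apply_symm_apply _
    exact isIrreducible_of_surjective_asAlgebraHom (this ▸ hE)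
  · rw [character, leftRegular_eq_mulLeft, ← trace_mulLeft_algEquiv e, trace_mulLeft_pi]
    refine Finset.sum_congr rfl fun i _ ↦ ?_
    rw [trace_mulLeft_matrix, Fintype.card_fin]
    congr 1
    exact (Matrix.trace_toLin'_eq _).symm

end RegularRepresentation

section PrimePowerConjugacyClass

open Representation

theorem natCast_eq_one_of_isIntegral_inv {k : Type*} [Field k] [CharZero k] {n : ℕ} (hn : n ≠ 0)
    (h : IsIntegral ℤ (n : k)⁻¹) : n = 1 := by
  have hrat : IsIntegral ℤ (n : ℚ)⁻¹ := by
    rw [← isIntegral_algebraMap_iff (algebraMap ℚ k).injective]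
    simpa using h
  obtain ⟨m, hm⟩ := IsIntegrallyClosed.isIntegral_iff.1 hrat
  have hmn : (m : ℚ) * n = 1 := by
    rw [← eq_intCast (algebraMap ℤ ℚ) m, hm, inv_mul_cancel₀ (Nat.cast_ne_zero.2 hn)]
  have hmn' : m * n = 1 := by exact_mod_cast hmn
  exact Nat.dvd_one.1 (Int.natCast_dvd_natCast.1 (Dvd.intro_left m hmn'))

-- Subtracting the dimensions of the invariants cancels the trivial constituents, which account for
-- `1` in the regular character.
theorem sum_mul_character_sub_finrank_invariants_eq_neg_one {k G : Type*} [Field k] [CharZero k]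
    [Group G] [Finite G] {ι : Type*} [Fintype ι] {V : ι → Type*} [∀ i, AddCommGroup (V i)]
    [∀ i, Module k (V i)] [∀ i, FiniteDimensional k (V i)] (ρ : ∀ i, Representation k G (V i))
    {c : ι → k} (hc : ∀ g, (leftRegular k G).character g = ∑ i, c i * (ρ i).character g)
    {g : G} (hg : g ≠ 1) :
    ∑ i, c i * ((ρ i).character g - finrank k (ρ i).invariants) = -1 := by
  classical
  have := Fintype.ofFinite G
  have hG : (Nat.card G : k) ≠ 0 := Nat.cast_ne_zero.2 Nat.card_pos.ne'
  have : Invertible (Nat.card G : k) := invertibleOfNonzero hG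
  have hinv : ∑ i, c i * finrank k (ρ i).invariants = 1 := calc
    ∑ i, c i * finrank k (ρ i).invariants
      = (Nat.card G : k)⁻¹ * ∑ x : G, ∑ i, c i * (ρ i).character x := by
        simp only [← card_inv_mul_sum_char_eq_finrank, Finset.mul_sum]
        rw [Finset.sum_comm]
        simp only [mul_left_comm]
    _ = (Nat.card G : k)⁻¹ * ∑ x : G, if x = 1 then (Nat.card G : k) else 0 := by
        simp only [← hc, character_leftRegular]
    _ = 1 := by simp
  simp only [mul_sub, Finset.sum_sub_distrib, hinv, ← hc, character_leftRegular, if_neg hg,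
    zero_sub]

variable {G : Type*} [Group G] [Finite G] [IsSimpleGroup G] {g : G} {q n : ℕ}

theorem isIntegral_finrank_mul_character_sub_div_prime {V : Type*} [AddCommGroup V] [Module ℂ V]
    [FiniteDimensional ℂ V] (ρ : Representation ℂ G V) [ρ.IsIrreducible]
    (hg : g ∉ Subgroup.center G) (hq : q.Prime) (hcard : Nat.card (conjugatesOf g) = q ^ n) :
    IsIntegral ℤ (finrank ℂ V * (ρ.character g - finrank ℂ ρ.invariants) / q) := by
  by_cases hρ : ρ.IsTrivial
  · have : ρ.character g = finrank ℂ V := by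
      rw [character, ρ.isTrivial_def g, LinearMap.trace_id]
    rw [invariants_eq_top, finrank_top, this, sub_self, mul_zero, zero_div]
    exact isIntegral_zero
  rw [invariants_eq_bot_of_not_isTrivial ρ hρ, finrank_bot, Nat.cast_zero, sub_zero]
  by_cases hdvd : q ∣ finrank ℂ V
  · obtain ⟨r, hr⟩ := hdvd
    have hdiv : finrank ℂ V * ρ.character g / q = r • ρ.character g := by
      have : (q : ℂ) ≠ 0 := Nat.cast_ne_zero.2 hq.ne_zero
      rw [hr, nsmul_eq_mul]
      push_cast
      field_simp
    exact hdiv ▸ (isIntegral_character ρ g).smul r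
  · have hcop : (Nat.card (conjugatesOf g)).Coprime (finrank ℂ V) :=
      hcard ▸ ((hq.coprime_iff_not_dvd).2 hdvd).pow_left n
    rw [character_eq_zero_of_coprime ρ hρ hg hcop, mul_zero, zero_div]
    exact isIntegral_zero

theorem mem_center_of_card_conjugatesOf_eq_prime_pow (hq : q.Prime)
    (hcard : Nat.card (conjugatesOf g) = q ^ n) : g ∈ Subgroup.center G := by
  by_contra hg
  have hg₁ : g ≠ 1 := fun h ↦ hg (h ▸ one_mem _)
  obtain ⟨m, d, ρ, _, hd⟩ := exists_isIrreducible_character_leftRegular_eq_sum ℂ G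
  have hint : IsIntegral ℤ (-1 / q : ℂ) := by
    rw [← sum_mul_character_sub_finrank_invariants_eq_neg_one ρ hd hg₁, Finset.sum_div]
    refine IsIntegral.sum _ fun i _ ↦ ?_
    simpa using isIntegral_finrank_mul_character_sub_div_prime (ρ i) hg hq hcard
  refine hq.ne_one (natCast_eq_one_of_isIntegral_inv (k := ℂ) hq.ne_zero ?_)
  simpa [neg_div] using hint.neg

end PrimePowerConjugacyClass

section PrimePowerProducts

variable {G : Type*} [Group G]

theorem card_conjugatesOf_eq_index_centralizer (g : G) :
    Nat.card (conjugatesOf g) = (Subgroup.centralizer {g}).index := by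
  have horbit : MulAction.orbit (ConjAct G) g = conjugatesOf g :=
    Set.ext fun h ↦ ConjAct.mem_orbit_conjAct.trans isConj_comm
  calc Nat.card (conjugatesOf g)
    _ = (MulAction.stabilizer (ConjAct G) g).index := by
      rw [MulAction.index_stabilizer, horbit, Nat.card_coe_set_eq]
    _ = (Subgroup.centralizer {g}).index := by
      rw [Subgroup.centralizer_eq_comap_stabilizer]
      exact (Subgroup.index_comap_of_surjective _ ConjAct.toConjAct.surjective).symm

variable [Finite G]

theorem exists_ne_one_not_dvd_card_conjugatesOf {p : ℕ} (hp : p.Prime)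
    (hdvd : p ∣ Nat.card G) : ∃ g : G, g ≠ 1 ∧ ¬p ∣ Nat.card (conjugatesOf g) := by
  have : Fact p.Prime := ⟨hp⟩
  let P : Sylow p G := default
  have : Nontrivial P := Subgroup.nontrivial_iff_ne_bot _ |>.2 (P.ne_bot_of_dvd_card hdvd)
  have := P.isPGroup'.center_nontrivial
  obtain ⟨z, hz⟩ := exists_ne (1 : Subgroup.center P)
  have hle : (P : Subgroup G) ≤ Subgroup.centralizer {(z : G)} := fun x hx ↦
    Subgroup.mem_centralizer_singleton_iff.2
      (congrArg Subtype.val (Subgroup.mem_center_iff.1 z.2 ⟨x, hx⟩))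
  refine ⟨z, by simpa using hz, fun h ↦ P.not_dvd_index ?_⟩
  rw [card_conjugatesOf_eq_index_centralizer] at h
  exact h.trans (Subgroup.index_dvd_of_le hle)

variable {p q a b : ℕ}

theorem exists_ne_one_card_conjugatesOf_eq_prime_pow [Nontrivial G] (hp : p.Prime)
    (hq : q.Prime) (hcard : Nat.card G = p ^ a * q ^ b) :
    ∃ g : G, g ≠ 1 ∧ ∃ r n, r.Prime ∧ Nat.card (conjugatesOf g) = r ^ n := by
  have hpq : p ∣ Nat.card G ∨ q ∣ Nat.card G := by
    obtain ⟨r, hr, hrG⟩ := Nat.exists_prime_and_dvd (Finite.one_lt_card (α := G)).ne'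
    obtain h | h := hr.dvd_mul.1 (hcard ▸ hrG)
    · exact .inl ((Nat.prime_eq_prime_of_dvd_pow hr hp h) ▸ hrG)
    · exact .inr ((Nat.prime_eq_prime_of_dvd_pow hr hq h) ▸ hrG)
  wlog hdvd : p ∣ Nat.card G generalizing p q a b
  · exact this hq hp (hcard.trans (mul_comm _ _)) hpq.symm (hpq.resolve_left hdvd)
  obtain ⟨g, hg, hpg⟩ := exists_ne_one_not_dvd_card_conjugatesOf hp hdvd
  have hdvd_card : Nat.card (conjugatesOf g) ∣ p ^ a * q ^ b := by
    rw [card_conjugatesOf_eq_index_centralizer, ← hcard]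
    exact Subgroup.index_dvd_card _
  have hcop : (Nat.card (conjugatesOf g)).Coprime (p ^ a) :=
    ((hp.coprime_iff_not_dvd.2 hpg).symm).pow_right a
  obtain ⟨n, -, hn⟩ := (Nat.dvd_prime_pow hq).1 (hcop.dvd_of_dvd_mul_left hdvd_card)
  exact ⟨g, hg, q, n, hq, hn⟩

theorem mul_comm_of_isSimpleGroup_of_card_eq [IsSimpleGroup G] (hp : p.Prime) (hq : q.Prime)
    (hcard : Nat.card G = p ^ a * q ^ b) (x y : G) : x * y = y * x := by
  obtain ⟨g, hg, r, n, hr, hn⟩ := exists_ne_one_card_conjugatesOf_eq_prime_pow hp hq hcard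
  have hcenter : Subgroup.center G = ⊤ :=
    (IsSimpleGroup.eq_bot_or_eq_top_of_normal _ inferInstance).resolve_left fun h ↦
      hg <| by simpa [h] using mem_center_of_card_conjugatesOf_eq_prime_pow hr hn
  exact Subgroup.mem_center_iff.1 (hcenter ▸ Subgroup.mem_top y) x

theorem exists_eq_pow_mul_pow_of_dvd {n : ℕ} (hp : p.Prime) (hq : q.Prime)
    (hn : n ∣ p ^ a * q ^ b) : ∃ c d, n = p ^ c * q ^ d := by
  obtain ⟨_, _, hs, ht, rfl⟩ := exists_dvd_and_dvd_of_dvd_mul hn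
  obtain ⟨c, -, rfl⟩ := (Nat.dvd_prime_pow hp).1 hs
  obtain ⟨d, -, rfl⟩ := (Nat.dvd_prime_pow hq).1 ht
  exact ⟨c, d, rfl⟩

theorem isSolvable_of_card_eq_prime_pow_mul_prime_pow (hp : p.Prime) (hq : q.Prime)
    (hcard : Nat.card G = p ^ a * q ^ b) : Group.IsSolvable G := by
  induction hm : Nat.card G using Nat.strong_induction_on generalizing G a b with
  | _ m ih =>
    subst hm
    cases subsingleton_or_nontrivial G
    · infer_instance
    by_cases hsimple : IsSimpleGroup G
    · exact Group.isSolvable_of_comm (mul_comm_of_isSimpleGroup_of_card_eq hp hq hcard)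
    obtain ⟨H, hH, hbot, htop⟩ : ∃ H : Subgroup G, H.Normal ∧ H ≠ ⊥ ∧ H ≠ ⊤ := by
      by_contra! h
      exact hsimple ⟨fun H hH ↦ or_iff_not_imp_left.2 (h H hH)⟩
    obtain ⟨_, _, hcardH⟩ := exists_eq_pow_mul_pow_of_dvd hp hq (hcard ▸ H.card_subgroup_dvd_card)
    obtain ⟨_, _, hcardQ⟩ := exists_eq_pow_mul_pow_of_dvd hp hq (hcard ▸ H.card_quotient_dvd_card)
    have hltH : Nat.card H < Nat.card G := H.card_mul_index ▸
      (Nat.lt_mul_iff_one_lt_right Nat.card_pos).2 (H.one_lt_index_of_ne_top htop)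
    have hltQ : Nat.card (G ⧸ H) < Nat.card G := H.card_mul_index ▸
      (Nat.lt_mul_iff_one_lt_left Nat.card_pos).2 (H.one_lt_card_iff_ne_bot.2 hbot)
    exact (Group.isSolvable_iff_subgroup_quotient H).2
      ⟨ih _ hltH hcardH rfl, ih _ hltQ hcardQ rfl⟩

end PrimePowerProducts

theorem exists_monoidHom_units_ne_one_of_isSolvable (G M : Type*) [Group G] [Finite G]
    [Nontrivial G] [Group.IsSolvable G] [CommMonoid M]
    [HasEnoughRootsOfUnity M (Monoid.exponent G)] : ∃ φ : G →* Mˣ, φ ≠ 1 := by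
  have : HasEnoughRootsOfUnity M (Monoid.exponent (Abelianization G)) :=
    HasEnoughRootsOfUnity.of_dvd M
      (MonoidHom.exponent_dvd (f := Abelianization.of) QuotientGroup.mk_surjective)
  obtain ⟨g, -, hg⟩ := SetLike.exists_of_lt
    (Group.IsSolvable.commutator_lt_top_of_nontrivial G)
  have hg₁ : Abelianization.of g ≠ 1 := fun h ↦ hg ((QuotientGroup.eq_one_iff g).1 h)
  obtain ⟨φ, hφ⟩ := CommGroup.exists_apply_ne_one_of_hasEnoughRootsOfUnity _ M hg₁
  exact ⟨φ.comp Abelianization.of, fun h ↦ hφ (DFunLike.congr_fun h g)⟩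

theorem stmt_18_general {G M : Type*} [Group G] [CommMonoid M]
    [HasEnoughRootsOfUnity M (Monoid.exponent G)] {p q a b : ℕ} (hp : p.Prime) (hq : q.Prime)
    (hab : 0 < a + b) (hcard : Nat.card G = p ^ a * q ^ b) : ∃ φ : G →* Mˣ, φ ≠ 1 := by
  have hpos : 0 < Nat.card G := hcard ▸ mul_pos (pow_pos hp.pos a) (pow_pos hq.pos b)
  have : Finite G := Nat.finite_of_card_ne_zero hpos.ne'
  have hne_one : Nat.card G ≠ 1 := by
    rw [hcard, Ne, mul_eq_one, Nat.pow_eq_one, Nat.pow_eq_one]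
    have := hp.ne_one
    have := hq.ne_one
    omega
  have : Nontrivial G := Finite.one_lt_card_iff_nontrivial.1 (by omega)
  have := isSolvable_of_card_eq_prime_pow_mul_prime_pow hp hq hcard
  exact exists_monoidHom_units_ne_one_of_isSolvable G M

theorem stmt_18 (G : Type) [Group G] [Fintype G]
    (p q a b : ℕ) (hp : p.Prime) (hq : q.Prime) (hab : 0 < a + b)
    (hcard : Fintype.card G = p ^ a * q ^ b) :
    ∃ φ : G →* ℂˣ, φ ≠ 1 := by
  have : NeZero (Monoid.exponent G : ℂ) := ⟨Nat.cast_ne_zero.2 Monoid.exponent_ne_zero_of_finite⟩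
  exact stmt_18_general hp hq hab (Nat.card_eq_fintype_card.trans hcard)
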